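/- In R = K⟨x,y⟩/(xy−1), the quotient R/I by the two-sided ideal I generated by 1−yx is isomorphic as a K-algebra to the Laurent polynomial ring K[X, X^{-1}], via x ↦ X and y ↦ X^{-1}. -/

import Mathlib

/-!
In `R/I` the class of `y` is a two-sided inverse of the class of `x`, so evaluation at this unit is
a homomorphism `K[X, X⁻¹] → R/I`. Conversely `xy = 1` gives `R → K[X, X⁻¹]`, which kills `1 - yx`
because `K[X, X⁻¹]` is commutative. The two maps are mutually inverse on generators.
-/

noncomputable section

/-- The defining relation of the Toeplitz/Jacobson algebra: `x * y = 1`. -/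
inductive ToeplitzRel (K : Type*) [Field K] :
    FreeAlgebra K (Fin 2) → FreeAlgebra K (Fin 2) → Prop
  | rel : ToeplitzRel K (FreeAlgebra.ι K 0 * FreeAlgebra.ι K 1) 1

/-- The Toeplitz/Jacobson algebra `R = K⟨x,y⟩/(xy-1)`. -/
abbrev Toeplitz (K : Type*) [Field K] := RingQuot (ToeplitzRel K)

variable (K : Type*) [Field K]

/-- The image of the generator `x` in `R`. -/
def tx : Toeplitz K := RingQuot.mkAlgHom K (ToeplitzRel K) (FreeAlgebra.ι K 0)

/-- The image of the generator `y` in `R`. -/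
def ty : Toeplitz K := RingQuot.mkAlgHom K (ToeplitzRel K) (FreeAlgebra.ι K 1)

/-- `f n = y^(n-1) x^(n-1) - y^n x^n`. -/
def tf (n : ℕ) : Toeplitz K := ty K ^ (n-1) * tx K ^ (n-1) - ty K ^ n * tx K ^ n

/-- The two-sided ideal `I = ⟨1 - yx⟩` of `R`. -/
def socIdeal : TwoSidedIdeal (Toeplitz K) := TwoSidedIdeal.span {1 - ty K * tx K}

section LaurentLift

open LaurentPolynomial

lemma laurent_T_mul_T_neg {R : Type*} [Semiring R] (n : ℤ) : (T n * T (-n) : R[T;T⁻¹]) = 1 := by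
  rw [← T_add, add_neg_cancel, T_zero]

variable {R A : Type*} [CommSemiring R] [Semiring A] [Algebra R A]

/-- Evaluation of Laurent polynomials at a unit `u` of an `R`-algebra, which need not be
commutative (unlike the target of `LaurentPolynomial.eval₂`). -/
def laurentLift (u : Aˣ) : R[T;T⁻¹] →ₐ[R] A :=
  AddMonoidAlgebra.lift R A ℤ ((Units.coeHom A).comp (zpowersHom Aˣ u))

lemma laurentLift_T (u : Aˣ) (n : ℤ) : laurentLift (R := R) u (T n) = ↑(u ^ n) := by
  rw [laurentLift, T, AddMonoidAlgebra.lift_single, one_smul]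
  rfl

lemma laurentLift_T_one (u : Aˣ) : laurentLift (R := R) u (T 1) = u := by
  rw [laurentLift_T, zpow_one]

lemma laurent_algHom_ext {f g : R[T;T⁻¹] →ₐ[R] A} (h : f (T 1) = g (T 1)) : f = g :=
  AddMonoidAlgebra.algHom_ext' (MonoidHom.ext_mint h) (Subsingleton.elim _ _)

lemma map_right_inverse_eq_T_neg_one {φ : A →ₐ[R] R[T;T⁻¹]} {x y : A}
    (hxy : x * y = 1) (hx : φ x = T 1) : φ y = T (-1) := by
  have T_one_mul_map : T 1 * φ y = 1 := by rw [← hx, ← map_mul, hxy, map_one]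
  exact inv_unique T_one_mul_map (laurent_T_mul_T_neg 1)

end LaurentLift

section SpanQuotient

lemma span_ringCon_le_ker {A B : Type*} [NonAssocRing A] [NonAssocSemiring B] {s : Set A}
    {f : A →+* B} (hf : ∀ a ∈ s, f a = 0) : (TwoSidedIdeal.span s).ringCon ≤ RingCon.ker f := by
  have span_le_ker : TwoSidedIdeal.span s ≤ TwoSidedIdeal.ker f :=
    TwoSidedIdeal.span_le.2 fun a ha ↦ (TwoSidedIdeal.mem_ker f).2 (hf a ha)
  exact TwoSidedIdeal.ringCon_le_iff.1 span_le_ker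

lemma mk'_span_eq_zero {A : Type*} [NonAssocRing A] {s : Set A} {a : A} (ha : a ∈ s) :
    (TwoSidedIdeal.span s).ringCon.mk' a = 0 := by
  rw [← TwoSidedIdeal.mem_ker, TwoSidedIdeal.ker_ringCon_mk']
  exact TwoSidedIdeal.subset_span ha

end SpanQuotient

section OneSidedInverse

open LaurentPolynomial

variable {A : Type*} [Ring A] {x y : A}

/-- The class of a right-invertible `x`, with `x * y = 1`, as a unit of the quotient `A/(1 - yx)`;
its inverse is the class of `y`. -/
def quotientUnit (hxy : x * y = 1) : (TwoSidedIdeal.span {1 - y * x}).ringCon.Quotientˣ where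
  val := (TwoSidedIdeal.span {1 - y * x}).ringCon.mk' x
  inv := (TwoSidedIdeal.span {1 - y * x}).ringCon.mk' y
  val_inv := by rw [← map_mul, hxy, map_one]
  inv_val := by
    have h := mk'_span_eq_zero (Set.mem_singleton (1 - y * x))
    rw [map_sub, map_one, map_mul, sub_eq_zero] at h
    exact h.symm

/-- The homomorphism `A/(1 - yx) → B` induced by `φ : A → B` when `x * y = 1` and `B` is
commutative. -/
def quotientLift {R B : Type*} [CommSemiring R] [CommRing B] [Algebra R A] [Algebra R B]
    (φ : A →ₐ[R] B) (hxy : x * y = 1) :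
    (TwoSidedIdeal.span {1 - y * x}).ringCon.Quotient →ₐ[R] B :=
  RingCon.liftₐ _ φ <| span_ringCon_le_ker <| by
    rintro _ rfl
    change φ (1 - y * x) = 0
    rw [map_sub, map_mul, mul_comm, ← map_mul, hxy, sub_self]

variable {R : Type*} [CommRing R] [Algebra R A] {φ : A →ₐ[R] R[T;T⁻¹]}

lemma quotientLift_comp_laurentLift (hxy : x * y = 1) (hx : φ x = T 1) :
    (quotientLift φ hxy).comp (laurentLift (quotientUnit hxy)) = AlgHom.id R _ := by
  apply laurent_algHom_ext
  rw [AlgHom.comp_apply, laurentLift_T_one]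
  exact hx

lemma laurentLift_comp_quotientLift (hxy : x * y = 1)
    (hgen : Algebra.adjoin R {x, y} = ⊤) (hx : φ x = T 1) :
    (laurentLift (quotientUnit hxy)).comp (quotientLift φ hxy) = AlgHom.id R _ := by
  apply RingCon.Quotient.hom_extₐ
  apply AlgHom.ext_of_adjoin_eq_top hgen
  rintro _ (rfl | rfl)
  · change laurentLift _ (φ _) = _
    rw [hx, laurentLift_T_one]
    rfl
  · change laurentLift _ (φ _) = _
    rw [map_right_inverse_eq_T_neg_one hxy hx, laurentLift_T, zpow_neg_one]
    rfl

theorem toeplitz_quotient_laurent_general (hxy : x * y = 1)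
    (hgen : Algebra.adjoin R {x, y} = ⊤) (hx : φ x = T 1) :
    ∃ e : (TwoSidedIdeal.span {1 - y * x}).ringCon.Quotient ≃ₐ[R] R[T;T⁻¹],
      e ((TwoSidedIdeal.span {1 - y * x}).ringCon.mk' x) = T 1 ∧
      e ((TwoSidedIdeal.span {1 - y * x}).ringCon.mk' y) = T (-1) :=
  ⟨AlgEquiv.ofAlgHom (quotientLift φ hxy) (laurentLift (quotientUnit hxy))
      (quotientLift_comp_laurentLift hxy hx)
      (laurentLift_comp_quotientLift hxy hgen hx),
    hx, map_right_inverse_eq_T_neg_one hxy hx⟩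

end OneSidedInverse

section Toeplitz

lemma tx_mul_ty : tx K * ty K = 1 := by
  rw [tx, ty, ← map_mul, RingQuot.mkAlgHom_rel K ToeplitzRel.rel, map_one]

lemma adjoin_tx_ty : Algebra.adjoin K {tx K, ty K} = ⊤ := by
  have generators : {tx K, ty K} =
      RingQuot.mkAlgHom K (ToeplitzRel K) '' Set.range (FreeAlgebra.ι K) := by
    ext a
    simp [Fin.exists_fin_two, eq_comm, tx, ty]
  rw [generators, ← AlgHom.map_adjoin, FreeAlgebra.adjoin_range_ι, Algebra.map_top,
    AlgHom.range_eq_top]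
  exact RingQuot.mkAlgHom_surjective K _

variable {K} {A : Type*} [Semiring A] [Algebra K A] {a b : A}

/-- The homomorphism `x ↦ a`, `y ↦ b` given by the universal property of the Toeplitz algebra. -/
def toeplitzLift (hab : a * b = 1) : Toeplitz K →ₐ[K] A :=
  RingQuot.liftAlgHom K ⟨FreeAlgebra.lift K ![a, b], by
    rintro _ _ ⟨⟩
    simpa using hab⟩

lemma toeplitzLift_tx (hab : a * b = 1) : toeplitzLift hab (tx K) = a := by
  simp [toeplitzLift, tx]

end Toeplitz

/-- `R/I ≅ K[X,X⁻¹]` as `K`-algebras, via `x ↦ X`, `y ↦ X⁻¹`. -/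
theorem toeplitz_quotient_laurent :
    ∃ e : (socIdeal K).ringCon.Quotient ≃+* LaurentPolynomial K,
      e ((socIdeal K).ringCon.mk' (tx K)) = LaurentPolynomial.T 1 ∧
      e ((socIdeal K).ringCon.mk' (ty K)) = LaurentPolynomial.T (-1) ∧
      ∀ c : K, e ((socIdeal K).ringCon.mk' (algebraMap K (Toeplitz K) c)) =
        algebraMap K (LaurentPolynomial K) c := by
  obtain ⟨e, e_tx, e_ty⟩ := toeplitz_quotient_laurent_general (tx_mul_ty K) (adjoin_tx_ty K)
    (toeplitzLift_tx (laurent_T_mul_T_neg 1))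
  exact ⟨e.toRingEquiv, e_tx, e_ty, e.commutes⟩
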